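/- Assume the local setting. Let G(x) be a μ×μ matrix with entries in K_v(x), and define G_n and χ_v as usual. Then χ_v ≥ |[κ_v]_q|_v^{1/κ_v} · |p|_v^{1/(κ_v(p−1))} / max(|G(x)|_{v,Gauss}, 1). -/

import Mathlib

open Filter
open scoped ENNReal

noncomputable section

variable {Kv : Type*} [NormedField Kv]

/-- `[n]_q = 1 + q + ⋯ + q^{n-1}`. -/
def qNat (q : Kv) (n : ℕ) : Kv := ∑ i ∈ Finset.range n, q ^ i

/-- `[n]_q! = [1]_q ⋯ [n]_q`. -/
def qFactorial (q : Kv) : ℕ → Kv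
  | 0 => 1
  | n + 1 => qFactorial q n * qNat q (n + 1)

/-- The Gaussian binomial coefficient `binom(n,i)_q`. -/
def qBinom (q : Kv) (n i : ℕ) : Kv := qFactorial q n / (qFactorial q i * qFactorial q (n - i))

/-- The substitution `x ↦ qx` on rational functions. -/
def ratSubst (q : Kv) (f : RatFunc Kv) : RatFunc Kv :=
  algebraMap (Polynomial Kv) (RatFunc Kv) (f.num.comp (Polynomial.C q * Polynomial.X)) /
    algebraMap (Polynomial Kv) (RatFunc Kv) (f.denom.comp (Polynomial.C q * Polynomial.X))

/-- The `q`-difference operator `d_q f(x) = (f(qx) - f(x))/((q-1)x)`. -/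
def qDeriv (q : Kv) (f : RatFunc Kv) : RatFunc Kv :=
  (ratSubst q f - f) / (RatFunc.C (q - 1) * RatFunc.X)

/-- The Gauss norm of a polynomial: the sup of the norms of its coefficients. -/
def polyGaussNorm (P : Polynomial Kv) : ℝ := ⨆ i : ℕ, ‖P.coeff i‖

/-- The Gauss norm of a rational function. -/
def gaussNorm (f : RatFunc Kv) : ℝ := polyGaussNorm f.num / polyGaussNorm f.denom

/-- The Gauss norm of a matrix of rational functions: max of the Gauss norms of the entries. -/
def matGaussNorm {μ : ℕ} (M : Matrix (Fin μ) (Fin μ) (RatFunc Kv)) : ℝ :=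
  ⨆ i, ⨆ j, gaussNorm (M i j)

/-- The sequence of matrices `G_n`: `G_0 = 1`, `G_{n+1}(x) = G(x)·G_n(qx) + (d_q G_n)(x)`. -/
def Gseq {μ : ℕ} (q : Kv) (G : Matrix (Fin μ) (Fin μ) (RatFunc Kv)) :
    ℕ → Matrix (Fin μ) (Fin μ) (RatFunc Kv)
  | 0 => 1
  | n + 1 => G * (Gseq q G n).map (ratSubst q) + (Gseq q G n).map (qDeriv q)

/-- `χ_v = min(1, liminf |G_n/[n]_q!|^{-1/n})`, computed in `ℝ≥0∞`. -/
def chiV {μ : ℕ} (q : Kv) (G : Matrix (Fin μ) (Fin μ) (RatFunc Kv)) : ℝ≥0∞ :=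
  min 1 (Filter.liminf (fun n : ℕ =>
    (ENNReal.ofReal (matGaussNorm (Gseq q G n) / ‖qFactorial q n‖)) ^ (-(1 / (n : ℝ))))
    Filter.atTop)

lemma pgn_eq (P : Polynomial Kv) :
    polyGaussNorm P = P.gaussNorm (NormedField.toAbsoluteValue Kv) 1 := by
  unfold polyGaussNorm
  have hle : ∀ i, ‖P.coeff i‖ ≤ P.gaussNorm (NormedField.toAbsoluteValue Kv) 1 := by
    intro i
    have h := P.le_gaussNorm (NormedField.toAbsoluteValue Kv) (c := 1) zero_le_one i
    rw [one_pow, mul_one] at h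
    exact h
  apply le_antisymm
  · exact ciSup_le hle
  · obtain ⟨i, hi⟩ := P.exists_eq_gaussNorm (NormedField.toAbsoluteValue Kv) 1
    rw [one_pow, mul_one] at hi
    rw [hi]
    exact le_ciSup (f := fun i => ‖P.coeff i‖) ⟨_, by rintro _ ⟨i, rfl⟩; exact hle i⟩ i

lemma coeff_le_pgn (P : Polynomial Kv) (i : ℕ) : ‖P.coeff i‖ ≤ polyGaussNorm P := by
  rw [pgn_eq]
  have h := P.le_gaussNorm (NormedField.toAbsoluteValue Kv) (c := 1) zero_le_one i
  rw [one_pow, mul_one] at h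
  exact h

lemma pgn_le {P : Polynomial Kv} {B : ℝ} (h : ∀ i, ‖P.coeff i‖ ≤ B) : polyGaussNorm P ≤ B :=
  ciSup_le h

lemma pgn_nonneg (P : Polynomial Kv) : 0 ≤ polyGaussNorm P :=
  (norm_nonneg _).trans (coeff_le_pgn P 0)

lemma pgn_pos {P : Polynomial Kv} (h : P ≠ 0) : 0 < polyGaussNorm P := by
  have h1 : P.leadingCoeff ≠ 0 := by simpa using h
  exact (norm_pos_iff.mpr h1).trans_le (coeff_le_pgn P _)

lemma na_abs [IsUltrametricDist Kv] : IsNonarchimedean (NormedField.toAbsoluteValue Kv) :=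
  fun x y => IsUltrametricDist.norm_add_le_max x y

lemma pgn_mul [IsUltrametricDist Kv] (P Q : Polynomial Kv) :
    polyGaussNorm (P * Q) = polyGaussNorm P * polyGaussNorm Q := by
  simp only [pgn_eq]
  exact Polynomial.gaussNorm_mul na_abs one_pos P Q

lemma pgn_add [IsUltrametricDist Kv] (P Q : Polynomial Kv) :
    polyGaussNorm (P + Q) ≤ max (polyGaussNorm P) (polyGaussNorm Q) := by
  simp only [pgn_eq]
  exact Polynomial.isNonarchimedean_gaussNorm _ na_abs zero_le_one P Q

lemma pgn_neg (P : Polynomial Kv) : polyGaussNorm (-P) = polyGaussNorm P := by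
  simp [polyGaussNorm]

lemma pgn_comp {q : Kv} (hq : ‖q‖ = 1) (P : Polynomial Kv) :
    polyGaussNorm (P.comp (Polynomial.C q * Polynomial.X)) = polyGaussNorm P := by
  simp [polyGaussNorm, Polynomial.comp_C_mul_X_coeff, hq]

lemma comp_ne_zero {q : Kv} (hq : ‖q‖ = 1) {P : Polynomial Kv} (h : P ≠ 0) :
    P.comp (Polynomial.C q * Polynomial.X) ≠ 0 := by
  intro h0
  have := pgn_pos h
  rw [← pgn_comp hq, h0] at this
  simp [polyGaussNorm] at this

lemma gn_div [IsUltrametricDist Kv] (P : Polynomial Kv) {Q : Polynomial Kv} (hQ : Q ≠ 0) :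
    gaussNorm (algebraMap (Polynomial Kv) (RatFunc Kv) P / algebraMap (Polynomial Kv) (RatFunc Kv) Q)
      = polyGaussNorm P / polyGaussNorm Q := by
  set f := algebraMap (Polynomial Kv) (RatFunc Kv) P / algebraMap (Polynomial Kv) (RatFunc Kv) Q
    with hf
  have h : f.num * Q = P * f.denom := (RatFunc.num_mul_eq_mul_denom_iff hQ).mpr hf
  have h2 := congrArg polyGaussNorm h
  rw [pgn_mul, pgn_mul] at h2
  unfold gaussNorm
  rw [div_eq_div_iff (pgn_pos f.denom_ne_zero).ne' (pgn_pos hQ).ne']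
  exact h2

lemma gn_nonneg (f : RatFunc Kv) : 0 ≤ gaussNorm f := div_nonneg (pgn_nonneg _) (pgn_nonneg _)

lemma gn_mul [IsUltrametricDist Kv] (f g : RatFunc Kv) :
    gaussNorm (f * g) = gaussNorm f * gaussNorm g := by
  conv_lhs => rw [← f.num_div_denom, ← g.num_div_denom, div_mul_div_comm, ← map_mul, ← map_mul]
  rw [gn_div _ (mul_ne_zero f.denom_ne_zero g.denom_ne_zero), pgn_mul, pgn_mul]
  unfold gaussNorm
  rw [div_mul_div_comm]

lemma gn_add [IsUltrametricDist Kv] (f g : RatFunc Kv) :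
    gaussNorm (f + g) ≤ max (gaussNorm f) (gaussNorm g) := by
  have hf := f.denom_ne_zero
  have hg := g.denom_ne_zero
  have hf' := pgn_pos hf
  have hg' := pgn_pos hg
  conv_lhs => rw [← f.num_div_denom, ← g.num_div_denom,
    div_add_div _ _ (RatFunc.algebraMap_ne_zero hf) (RatFunc.algebraMap_ne_zero hg),
    ← map_mul, ← map_mul, ← map_mul, ← map_add]
  rw [gn_div _ (mul_ne_zero hf hg), pgn_mul]
  rw [div_le_iff₀ (mul_pos hf' hg')]
  refine (pgn_add _ _).trans ?_
  rw [pgn_mul, pgn_mul]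
  have e1 : polyGaussNorm f.num = gaussNorm f * polyGaussNorm f.denom := by
    unfold gaussNorm; field_simp
  have e2 : polyGaussNorm g.num = gaussNorm g * polyGaussNorm g.denom := by
    unfold gaussNorm; field_simp
  rw [e1, e2]
  apply max_le
  · rw [mul_assoc]
    gcongr
    exact le_max_left _ _
  · rw [mul_left_comm]
    rw [mul_left_comm, mul_comm, mul_assoc, mul_comm (polyGaussNorm g.denom)]
    gcongr
    exact le_max_right _ _

lemma gn_zero : gaussNorm (0 : RatFunc Kv) = 0 := by
  simp [gaussNorm, polyGaussNorm]

lemma gn_one [IsUltrametricDist Kv] : gaussNorm (1 : RatFunc Kv) = 1 := by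
  have h : gaussNorm (1 : RatFunc Kv) = polyGaussNorm (1 : Polynomial Kv) / polyGaussNorm (1 : Polynomial Kv) := by
    simp [gaussNorm]
  rw [h, div_self (pgn_pos (one_ne_zero (α := Polynomial Kv))).ne']

lemma gn_sum [IsUltrametricDist Kv] {ι : Type*} (s : Finset ι) (f : ι → RatFunc Kv) {B : ℝ}
    (hB : 0 ≤ B) (h : ∀ i ∈ s, gaussNorm (f i) ≤ B) : gaussNorm (∑ i ∈ s, f i) ≤ B := by
  classical
  induction s using Finset.induction_on with
  | empty => simpa [gn_zero] using hB
  | insert a s ha ih =>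
    rw [Finset.sum_insert ha]
    refine (gn_add _ _).trans (max_le (h _ (by simp)) (ih fun i hi => h i (by simp [hi])))

lemma gn_subst [IsUltrametricDist Kv] {q : Kv} (hq : ‖q‖ = 1) (f : RatFunc Kv) :
    gaussNorm (ratSubst q f) = gaussNorm f := by
  unfold ratSubst
  rw [gn_div _ (comp_ne_zero hq f.denom_ne_zero), pgn_comp hq, pgn_comp hq]
  rfl

lemma norm_qNat_le [IsUltrametricDist Kv] {q : Kv} (hq : ‖q‖ = 1) (n : ℕ) : ‖qNat q n‖ ≤ 1 := by
  unfold qNat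
  refine IsUltrametricDist.norm_sum_le_of_forall_le_of_nonneg zero_le_one fun i _ => ?_
  simp [hq]

lemma exists_qd [IsUltrametricDist Kv] {q : Kv} (hq : ‖q‖ = 1) (hq1 : q ≠ 1) (P : Polynomial Kv) :
    ∃ D : Polynomial Kv, polyGaussNorm D ≤ polyGaussNorm P ∧
      P.comp (Polynomial.C q * Polynomial.X)
        = P + D * (Polynomial.C (q - 1) * Polynomial.X) := by
  have hq1' : q - 1 ≠ 0 := sub_ne_zero.mpr hq1
  refine ⟨Polynomial.C (q - 1)⁻¹ *
    (P.comp (Polynomial.C q * Polynomial.X) - P).divX, ?_, ?_⟩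
  · apply pgn_le
    intro i
    have : (Polynomial.C (q - 1)⁻¹ *
      (P.comp (Polynomial.C q * Polynomial.X) - P).divX).coeff i
        = P.coeff (i + 1) * qNat q (i + 1) := by
      rw [Polynomial.coeff_C_mul, Polynomial.coeff_divX, Polynomial.coeff_sub,
        Polynomial.comp_C_mul_X_coeff, qNat, geom_sum_eq hq1]
      field_simp
    rw [this, norm_mul]
    calc _ ≤ ‖P.coeff (i+1)‖ * 1 := by gcongr; exact norm_qNat_le hq _
      _ ≤ _ := by rw [mul_one]; exact coeff_le_pgn _ _
  · have h := Polynomial.divX_mul_X_add (P.comp (Polynomial.C q * Polynomial.X) - P)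
    have h0 : (P.comp (Polynomial.C q * Polynomial.X) - P).coeff 0 = 0 := by
      rw [Polynomial.coeff_sub, Polynomial.comp_C_mul_X_coeff]; simp
    rw [h0, Polynomial.C_0, add_zero] at h
    have h1 : (Polynomial.C (q - 1)⁻¹ : Polynomial Kv) * Polynomial.C (q - 1) = 1 := by
      rw [← Polynomial.C_mul, inv_mul_cancel₀ hq1', Polynomial.C_1]
    linear_combination -h - (P.comp (Polynomial.C q * Polynomial.X) - P).divX * Polynomial.X * h1

lemma gn_qDeriv [IsUltrametricDist Kv] {q : Kv} (hq : ‖q‖ = 1) (hq1 : q ≠ 1) (f : RatFunc Kv) :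
    gaussNorm (qDeriv q f) ≤ gaussNorm f := by
  obtain ⟨Da, hDa, ha⟩ := exists_qd hq hq1 f.num
  obtain ⟨Db, hDb, hb⟩ := exists_qd hq hq1 f.denom
  have hB := comp_ne_zero hq f.denom_ne_zero
  have hBn := pgn_comp hq f.denom
  have hb0 := f.denom_ne_zero
  have hb0' := pgn_pos hb0
  have key : qDeriv q f = algebraMap (Polynomial Kv) (RatFunc Kv) (Da * f.denom - f.num * Db) /
      algebraMap (Polynomial Kv) (RatFunc Kv)
        (f.denom * f.denom.comp (Polynomial.C q * Polynomial.X)) := by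
    unfold qDeriv ratSubst
    have hq1' : q - 1 ≠ 0 := sub_ne_zero.mpr hq1
    conv_lhs => enter [1, 2]; rw [← f.num_div_denom]
    have hX : (RatFunc.C (q - 1) * RatFunc.X : RatFunc Kv) =
      algebraMap (Polynomial Kv) (RatFunc Kv) (Polynomial.C (q - 1) * Polynomial.X) := by simp
    have hX0 : (Polynomial.C (q - 1) * Polynomial.X : Polynomial Kv) ≠ 0 :=
      mul_ne_zero (Polynomial.C_ne_zero.mpr hq1') Polynomial.X_ne_zero
    rw [hX, div_sub_div _ _ (RatFunc.algebraMap_ne_zero hB) (RatFunc.algebraMap_ne_zero hb0),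
      div_div, div_eq_div_iff]
    · simp only [← map_mul, ← map_sub]
      congr 1
      rw [ha, hb]
      ring
    · simp only [← map_mul]
      exact RatFunc.algebraMap_ne_zero (mul_ne_zero (mul_ne_zero hB hb0) hX0)
    · exact RatFunc.algebraMap_ne_zero (mul_ne_zero hb0 hB)
  rw [key, gn_div _ (mul_ne_zero hb0 hB), pgn_mul, hBn, gaussNorm,
    div_le_div_iff₀ (mul_pos hb0' hb0') hb0', ← mul_assoc]
  gcongr
  rw [sub_eq_add_neg]
  refine (pgn_add _ _).trans (max_le ?_ ?_)
  · rw [pgn_mul]; gcongr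
  · rw [pgn_neg, pgn_mul]; gcongr; exact pgn_nonneg _

lemma mgn_le {μ : ℕ} {M : Matrix (Fin μ) (Fin μ) (RatFunc Kv)} {B : ℝ} (hB : 0 ≤ B)
    (h : ∀ i j, gaussNorm (M i j) ≤ B) : matGaussNorm M ≤ B :=
  Real.iSup_le (fun i => Real.iSup_le (fun j => h i j) hB) hB

lemma le_mgn {μ : ℕ} (M : Matrix (Fin μ) (Fin μ) (RatFunc Kv)) (i j : Fin μ) :
    gaussNorm (M i j) ≤ matGaussNorm M :=
  (le_ciSup (f := fun j => gaussNorm (M i j)) (Set.finite_range _).bddAbove j).trans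
    (le_ciSup (f := fun i => ⨆ j, gaussNorm (M i j)) (Set.finite_range _).bddAbove i)

lemma mgn_nonneg {μ : ℕ} (M : Matrix (Fin μ) (Fin μ) (RatFunc Kv)) : 0 ≤ matGaussNorm M :=
  Real.iSup_nonneg fun _ => Real.iSup_nonneg fun _ => gn_nonneg _

lemma Gseq_le [IsUltrametricDist Kv] {q : Kv} (hq : ‖q‖ = 1) (hq1 : q ≠ 1) {μ : ℕ}
    (G : Matrix (Fin μ) (Fin μ) (RatFunc Kv)) (n : ℕ) :
    matGaussNorm (Gseq q G n) ≤ max (matGaussNorm G) 1 ^ n := by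
  set M := max (matGaussNorm G) 1 with hM
  have hM1 : 1 ≤ M := le_max_right _ _
  have hM0 : 0 ≤ M := zero_le_one.trans hM1
  induction n with
  | zero =>
    apply mgn_le (by simp)
    intro i j
    simp only [Gseq, Matrix.one_apply, pow_zero]
    split_ifs
    · rw [gn_one]
    · rw [gn_zero]; exact zero_le_one
  | succ n ih =>
    apply mgn_le (by positivity)
    intro i j
    simp only [Gseq, Matrix.add_apply, Matrix.mul_apply, Matrix.map_apply]
    refine (gn_add _ _).trans (max_le ?_ ?_)
    · apply gn_sum _ _ (by positivity)
      intro k _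
      rw [gn_mul, gn_subst hq, pow_succ']
      exact mul_le_mul ((le_mgn G i k).trans (le_max_left _ _)) ((le_mgn _ k j).trans ih)
        (gn_nonneg _) hM0
    · refine (gn_qDeriv hq hq1 _).trans (((le_mgn _ i j).trans ih).trans ?_)
      exact pow_le_pow_right₀ hM1 (Nat.le_succ n)

lemma norm_sum_lt_aux [IsUltrametricDist Kv] {ι : Type*} (s : Finset ι) (f : ι → Kv) {B : ℝ}
    (hB : 0 < B) (h : ∀ i ∈ s, ‖f i‖ < B) : ‖∑ i ∈ s, f i‖ < B := by
  classical
  induction s using Finset.induction_on with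
  | empty => simpa using hB
  | insert a s ha ih =>
    rw [Finset.sum_insert ha]
    exact (IsUltrametricDist.norm_add_le_max _ _).trans_lt
      (max_lt (h _ (by simp)) (ih fun i hi => h i (by simp [hi])))

lemma norm_nat_le [IsUltrametricDist Kv] (n : ℕ) : ‖(n : Kv)‖ ≤ 1 :=
  IsUltrametricDist.norm_natCast_le_one Kv n

lemma norm_nat_coprime [IsUltrametricDist Kv] {p : ℕ} (hp : p.Prime) (hpv : ‖(p : Kv)‖ < 1)
    {m : ℕ} (hm : ¬ p ∣ m) : ‖(m : Kv)‖ = 1 := by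
  have hco : IsCoprime (p : ℤ) (m : ℤ) :=
    Nat.isCoprime_iff_coprime.mpr ((Nat.Prime.coprime_iff_not_dvd hp).mpr hm)
  obtain ⟨a, b, hab⟩ := hco
  have h : (a : Kv) * p + b * m = 1 := by exact_mod_cast congrArg (Int.cast : ℤ → Kv) hab
  apply le_antisymm (norm_nat_le m)
  by_contra hlt
  push Not at hlt
  have hi : ∀ a : ℤ, ‖(a : Kv)‖ ≤ 1 := fun a => IsUltrametricDist.norm_intCast_le_one Kv a
  have h1 : ‖(a : Kv) * p + b * m‖ < 1 := by
    refine (IsUltrametricDist.norm_add_le_max _ _).trans_lt (max_lt ?_ ?_)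
    · rw [norm_mul]
      exact (mul_le_of_le_one_left (norm_nonneg _) (hi a)).trans_lt hpv
    · rw [norm_mul]
      exact (mul_le_of_le_one_left (norm_nonneg _) (hi b)).trans_lt hlt
  rw [h, norm_one] at h1
  exact lt_irrefl _ h1

lemma norm_nat_eq [IsUltrametricDist Kv] {p : ℕ} (hp : p.Prime) (hpv : ‖(p : Kv)‖ < 1)
    {m : ℕ} (hm : m ≠ 0) : ‖(m : Kv)‖ = ‖(p : Kv)‖ ^ padicValNat p m := by
  have := Fact.mk hp
  obtain ⟨e, m', hm', he⟩ := Nat.exists_eq_pow_mul_and_not_dvd hm p hp.ne_one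
  have hm'0 : m' ≠ 0 := by rintro rfl; simp at hm'
  have : padicValNat p m = e := by
    rw [he, padicValNat.mul (pow_ne_zero _ hp.ne_zero) hm'0, padicValNat.prime_pow,
      padicValNat.eq_zero_of_not_dvd hm', add_zero]
  rw [this, he]
  push_cast
  rw [norm_mul, norm_pow, norm_nat_coprime hp hpv hm', mul_one]

lemma norm_fact_ge [IsUltrametricDist Kv] {p : ℕ} (hp : p.Prime) (hpv : ‖(p : Kv)‖ < 1)
    {r : ℝ} (hr0 : 0 ≤ r) (hr1 : r ≤ 1) (hr : r ^ (p - 1) = ‖(p : Kv)‖) (m : ℕ) :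
    r ^ (m - 1) ≤ ‖(m.factorial : Kv)‖ := by
  have := Fact.mk hp
  rw [norm_nat_eq hp hpv m.factorial_ne_zero, ← hr, ← pow_mul]
  apply pow_le_pow_of_le_one hr0 hr1
  rcases Nat.eq_zero_or_pos m with rfl | hm
  · simp
  · have := sub_one_mul_padicValNat_factorial_lt_of_ne_zero (p := p) hm.ne'
    omega

lemma qNat_ge [IsUltrametricDist Kv] {p : ℕ} (hp : p.Prime) (hpv : ‖(p : Kv)‖ < 1)
    {r : ℝ} (hr0 : 0 < r) (hr1 : r ≤ 1) (hr : r ^ (p - 1) = ‖(p : Kv)‖)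
    {Q : Kv} (hQ : Q ≠ 1) (hQr : ‖1 - Q‖ < r) (m : ℕ) : ‖(m : Kv)‖ ≤ ‖qNat Q m‖ := by
  have hfac : ∀ m : ℕ, 0 < ‖(m.factorial : Kv)‖ := fun m =>
    (pow_pos hr0 _).trans_le (norm_fact_ge hp hpv hr0.le hr1 hr m)
  rcases m with _ | m
  · simp
  have hfs : ∀ k : ℕ, ‖((k + 1).factorial : Kv)‖ ≤ ‖((k + 1 : ℕ) : Kv)‖ := by
    intro k
    rw [Nat.factorial_succ, Nat.cast_mul, norm_mul]
    exact mul_le_of_le_one_right (norm_nonneg _) (norm_nat_le _)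
  have hpos : ∀ k : ℕ, 0 < ‖((k + 1 : ℕ) : Kv)‖ := fun k => (hfac _).trans_le (hfs k)
  have hx0 : Q - 1 ≠ 0 := sub_ne_zero.mpr hQ
  have hexp : qNat Q (m + 1) =
      ∑ k ∈ Finset.range (m + 1), (((m + 1).choose (k + 1) : ℕ) : Kv) * (Q - 1) ^ k := by
    apply mul_right_cancel₀ hx0
    rw [qNat, geom_sum_mul]
    have h := add_pow (Q - 1) 1 (m + 1)
    rw [Finset.sum_range_succ', sub_add_cancel] at h
    rw [h, Finset.sum_mul]
    simp only [one_pow, mul_one, pow_zero, Nat.choose_zero_right, Nat.cast_one, add_sub_cancel_right]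
    refine Finset.sum_congr rfl fun k _ => ?_
    ring
  rw [hexp, Finset.sum_range_succ']
  simp only [zero_add, Nat.choose_one_right, pow_zero, mul_one]
  have hR : ‖∑ k ∈ Finset.range m, (((m + 1).choose (k + 1 + 1) : ℕ) : Kv) * (Q - 1) ^ (k + 1)‖
      < ‖((m + 1 : ℕ) : Kv)‖ := by
    apply norm_sum_lt_aux _ _ (hpos m)
    intro k _
    have h1 : ‖(((m + 1).choose (k + 1 + 1) : ℕ) : Kv)‖ * ‖((k + 1 + 1 : ℕ) : Kv)‖
        ≤ ‖((m + 1 : ℕ) : Kv)‖ := by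
      rw [← norm_mul, ← Nat.cast_mul, ← Nat.add_one_mul_choose_eq, Nat.cast_mul, norm_mul]
      exact mul_le_of_le_one_right (norm_nonneg _) (norm_nat_le _)
    have h2 : ‖(Q - 1) ^ (k + 1)‖ < ‖((k + 1 + 1 : ℕ) : Kv)‖ := by
      rw [norm_pow, norm_sub_rev]
      calc ‖1 - Q‖ ^ (k + 1) < r ^ (k + 1) := by gcongr
        _ ≤ ‖((k + 1 + 1).factorial : Kv)‖ := norm_fact_ge hp hpv hr0.le hr1 hr (k + 1 + 1)
        _ ≤ _ := hfs _
    rw [norm_mul]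
    rcases (norm_nonneg ((((m + 1).choose (k + 1 + 1) : ℕ) : Kv))).eq_or_lt with h0 | h0
    · rw [← h0, zero_mul]; exact hpos m
    · exact (mul_lt_mul_of_pos_left h2 h0).trans_le h1
  by_contra hlt
  push Not at hlt
  set R := ∑ k ∈ Finset.range m, (((m + 1).choose (k + 1 + 1) : ℕ) : Kv) * (Q - 1) ^ (k + 1)
  have h3 : ((m + 1 : ℕ) : Kv) = (R + ((m + 1 : ℕ) : Kv)) + -R := by ring
  have h4 := IsUltrametricDist.norm_add_le_max (R + ((m + 1 : ℕ) : Kv)) (-R)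
  rw [← h3, norm_neg] at h4
  exact absurd h4 (not_le.mpr (max_lt hlt hR))

lemma qNat_mul_eq {q : Kv} (κ m : ℕ) (hq : q ≠ 1) :
    qNat q (κ * m) = qNat q κ * qNat (q ^ κ) m := by
  apply mul_right_cancel₀ (sub_ne_zero.mpr hq)
  rw [qNat, geom_sum_mul, mul_right_comm, qNat, geom_sum_mul, qNat, mul_geom_sum, pow_mul]

lemma qFact_ge [IsUltrametricDist Kv] {p : ℕ} (hp : p.Prime) (hpv : ‖(p : Kv)‖ < 1)
    {r : ℝ} (hr0 : 0 < r) (hr1 : r ≤ 1) (hr : r ^ (p - 1) = ‖(p : Kv)‖)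
    {q : Kv} (hq1 : ‖q‖ = 1) (hqru : ∀ m : ℕ, 0 < m → q ^ m ≠ 1)
    (κ : ℕ) (hκpos : 0 < κ) (hκlt : ‖1 - q ^ κ‖ < 1)
    (hκmin : ∀ m : ℕ, 0 < m → ‖1 - q ^ m‖ < 1 → κ ≤ m) (hdw : ‖1 - q ^ κ‖ < r) (n : ℕ) :
    ‖qNat q κ‖ ^ (n / κ) * ‖((n / κ).factorial : Kv)‖ ≤ ‖qFactorial q n‖ := by
  have hqne : q ≠ 1 := by simpa using hqru 1 one_pos
  induction n with
  | zero => simp [qFactorial]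
  | succ n ih =>
    rw [qFactorial, norm_mul, Nat.succ_div]
    split_ifs with hd
    · have he : n + 1 = κ * (n / κ + 1) := by
        have := Nat.mul_div_cancel' hd
        rw [Nat.succ_div, if_pos hd] at this
        exact this.symm
      have h1 : ‖qNat q κ‖ * ‖((n / κ + 1 : ℕ) : Kv)‖ ≤ ‖qNat q (n + 1)‖ := by
        rw [he, qNat_mul_eq _ _ hqne, norm_mul]
        gcongr
        have h2 := qNat_ge hp hpv hr0 hr1 hr (hqru κ hκpos) hdw (n / κ + 1)
        exact h2
      calc _ = (‖qNat q κ‖ ^ (n / κ) * ‖((n / κ).factorial : Kv)‖) *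
            (‖qNat q κ‖ * ‖((n / κ + 1 : ℕ) : Kv)‖) := by
            rw [Nat.factorial_succ, Nat.cast_mul, norm_mul]; ring
        _ ≤ _ := by gcongr
    · rw [add_zero]
      refine ih.trans (le_mul_of_one_le_right (norm_nonneg _) ?_)
      by_contra hlt
      push Not at hlt
      have h1 : ‖1 - q‖ ≤ 1 := by
        rw [sub_eq_add_neg]
        refine (IsUltrametricDist.norm_add_le_max _ _).trans (by simp [hq1])
      have h2 : ‖1 - q ^ (n + 1)‖ < 1 := by
        rw [norm_sub_rev, ← geom_sum_mul, norm_mul, norm_sub_rev q]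
        exact (mul_le_of_le_one_right (norm_nonneg _) h1).trans_lt hlt
      set s := (n + 1) % κ with hs
      set t := (n + 1) / κ
      have hst : κ * t + s = n + 1 := Nat.div_add_mod _ _
      have hs0 : 0 < s := Nat.pos_of_ne_zero fun h => hd (Nat.dvd_of_mod_eq_zero h)
      have hsκ : s < κ := Nat.mod_lt _ hκpos
      have h3 : ‖1 - (q ^ κ) ^ t‖ < 1 := by
        rw [norm_sub_rev, ← geom_sum_mul, norm_mul, norm_sub_rev (q ^ κ)]
        refine (mul_le_of_le_one_left (norm_nonneg _) ?_).trans_lt hκlt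
        exact norm_qNat_le (by simp [hq1]) t
      have h4 : 1 - q ^ s = (1 - q ^ (n + 1)) + -(q ^ s * (1 - (q ^ κ) ^ t)) := by
        rw [← hst, pow_add, pow_mul]; ring
      have h5 : ‖1 - q ^ s‖ < 1 := by
        rw [h4]
        refine (IsUltrametricDist.norm_add_le_max _ _).trans_lt (max_lt h2 ?_)
        rw [norm_neg, norm_mul, norm_pow, hq1, one_pow, one_mul]
        exact h3
      exact absurd (hκmin s hs0 h5) (not_le.mpr hsκ)

theorem q_difference_first_chi_estimate
    {Kv : Type*} [NontriviallyNormedField Kv] [CompleteSpace Kv]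
    (hna : ∀ x y : Kv, ‖x + y‖ ≤ max ‖x‖ ‖y‖)
    (p : ℕ) (hp : Nat.Prime p) (hpv : ‖(p : Kv)‖ < 1)
    (q : Kv) (hq1 : ‖q‖ = 1) (hqru : ∀ m : ℕ, 0 < m → q ^ m ≠ 1)
    (κ : ℕ) (hκpos : 0 < κ) (hκlt : ‖1 - q ^ κ‖ < 1)
    (hκmin : ∀ m : ℕ, 0 < m → ‖1 - q ^ m‖ < 1 → κ ≤ m)
    (hdw : ‖1 - q ^ κ‖ < ‖(p : Kv)‖ ^ ((1 : ℝ) / ((p : ℝ) - 1)))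
    (μ : ℕ) (G : Matrix (Fin μ) (Fin μ) (RatFunc Kv)) :
    ENNReal.ofReal
        ((‖qNat q κ‖ ^ ((1 : ℝ) / (κ : ℝ)) * ‖(p : Kv)‖ ^ ((1 : ℝ) / ((κ : ℝ) * ((p : ℝ) - 1)))) /
          max (matGaussNorm G) 1) ≤
      chiV q G := by
  have : IsUltrametricDist Kv :=
    IsUltrametricDist.isUltrametricDist_of_forall_norm_add_le_max_norm hna
  have hqne : q ≠ 1 := by simpa using hqru 1 one_pos
  have hp1 : (0 : ℝ) < (p : ℝ) - 1 := by
    have : (1 : ℝ) < p := by exact_mod_cast hp.one_lt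
    linarith
  set P := ‖(p : Kv)‖ with hP
  set r := P ^ ((1 : ℝ) / ((p : ℝ) - 1)) with hrdef
  have hP0 : 0 ≤ P := norm_nonneg _
  have hr0 : 0 < r := (norm_nonneg _).trans_lt hdw
  have hr1 : r ≤ 1 := Real.rpow_le_one hP0 hpv.le (by positivity)
  have hr : r ^ (p - 1) = P := by
    rw [← Real.rpow_natCast, hrdef, ← Real.rpow_mul hP0, Nat.cast_sub hp.one_le, Nat.cast_one,
      one_div_mul_cancel hp1.ne', Real.rpow_one]
  have hκ0 : (0 : ℝ) < κ := by exact_mod_cast hκpos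
  set a := ‖qNat q κ‖ with ha
  have ha1 : a ≤ 1 := norm_qNat_le hq1 κ
  have ha0 : 0 < a := by
    rw [ha, norm_pos_iff]
    intro h0
    have h := geom_sum_mul q κ
    change qNat q κ * _ = _ at h
    rw [h0, zero_mul] at h
    exact hqru κ hκpos (sub_eq_zero.mp h.symm)
  set c := a ^ ((1 : ℝ) / (κ : ℝ)) * P ^ ((1 : ℝ) / ((κ : ℝ) * ((p : ℝ) - 1))) with hc
  have hce : c = (a * r) ^ ((1 : ℝ) / (κ : ℝ)) := by
    rw [hc, Real.mul_rpow ha0.le hr0.le, hrdef, ← Real.rpow_mul hP0, one_div_mul_one_div,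
      mul_comm (κ : ℝ)]
  have har : 0 < a * r := mul_pos ha0 hr0
  have har1 : a * r ≤ 1 := mul_le_one₀ ha1 hr0.le hr1
  have hc0 : 0 < c := by rw [hce]; positivity
  have hc1 : c ≤ 1 := by rw [hce]; exact Real.rpow_le_one har.le har1 (by positivity)
  have hcκ : c ^ κ = a * r := by
    rw [hce, ← Real.rpow_natCast, ← Real.rpow_mul har.le, one_div_mul_cancel hκ0.ne',
      Real.rpow_one]
  have hfact : ∀ n, c ^ n ≤ ‖qFactorial q n‖ := by
    intro n
    refine le_trans ?_ (qFact_ge hp hpv hr0 hr1 hr hq1 hqru κ hκpos hκlt hκmin hdw n)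
    calc c ^ n ≤ c ^ (κ * (n / κ)) := pow_le_pow_of_le_one hc0.le hc1 (Nat.mul_div_le n κ)
      _ = a ^ (n / κ) * r ^ (n / κ) := by rw [pow_mul, hcκ, mul_pow]
      _ ≤ _ := by
        gcongr
        exact (pow_le_pow_of_le_one hr0.le hr1 (Nat.sub_le _ _)).trans
          (norm_fact_ge hp hpv hr0.le hr1 hr _)
  set M := max (matGaussNorm G) 1 with hM
  have hM1 : 1 ≤ M := le_max_right _ _
  have hM0 : 0 < M := zero_lt_one.trans_le hM1
  unfold chiV
  apply le_min
  · rw [ENNReal.ofReal_le_one, div_le_one hM0]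
    exact hc1.trans hM1
  · apply Filter.le_liminf_of_le
    · isBoundedDefault
    · filter_upwards [Filter.eventually_gt_atTop 0] with n hn
      have hn0 : (0 : ℝ) < n := by exact_mod_cast hn
      have hle : matGaussNorm (Gseq q G n) / ‖qFactorial q n‖ ≤ (M / c) ^ n := by
        rw [div_pow]
        exact div_le_div₀ (by positivity) (Gseq_le hq1 hqne G n) (by positivity) (hfact n)
      rw [ENNReal.rpow_neg, ← ENNReal.inv_le_inv, inv_inv]
      rw [← ENNReal.ofReal_inv_of_pos (by positivity), inv_div]
      calc _ ≤ (ENNReal.ofReal ((M / c) ^ n)) ^ (1 / (n : ℝ)) := by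
            gcongr
        _ = _ := by
          rw [ENNReal.ofReal_rpow_of_nonneg (by positivity) (by positivity),
            one_div, Real.pow_rpow_inv_natCast (by positivity) hn.ne']
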